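/- arXiv:2002.09363 — 3 statements merged into one kernel-verified Lean document; each statement's English description precedes it below -/
import Mathlib

section
/- Norm bound for the boundary-law operator T (Lemma 5.2 / lem:ineq): Assume ‖Q‖_{(d+1)/2,ℤ^k} < ∞. Then for every x ∈ ℓ^{d+1}(ℤ^k∖{0}) with x ≥ 0 one has ‖T(x)‖_{d+1,ℤ^k∖{0}} ≤ ‖Q‖_{d+1,ℤ^k∖{0}} + ‖Q‖_{(d+1)/2,ℤ^k} · ‖x‖_{d+1,ℤ^k∖{0}}^d < ∞; in particular T maps ℓ^{d+1}(ℤ^k∖{0}) nonnegative elements into ℓ^{d+1}(ℤ^k∖{0}). -/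
/-!
The denominator of `T(x)(i)` is at least `1`, so `T(x)` is dominated pointwise by `Q + Q ∗ x^d`.
Minkowski's inequality in `ℓ^{d+1}` leaves `‖Q‖_{d+1}`, which is finite because
`ℓ^{(d+1)/2} ⊆ ℓ^{d+1}`, and the norm of the convolution. Young's inequality with the exponents
`(d+1)/2` for `Q` and `(d+1)/d` for `x^d` bounds the latter, since
`2/(d+1) + d/(d+1) = 1 + 1/(d+1)` and `‖x^d‖_{(d+1)/d} = ‖x‖_{d+1}^d`. The estimates are carried out
in `ℝ≥0∞`, where sums need no convergence hypotheses; finiteness of the final bound then yields both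
the summability and the real inequality.
-/

open scoped BigOperators
open Filter Topology

noncomputable section

/-- The integer lattice `ℤ^k`. -/
abbrev ZkL (k : ℕ) := Fin k → ℤ

/-- The punctured integer lattice `ℤ^k ∖ {0}`, as a subtype. -/
abbrev ZkP (k : ℕ) := {j : ZkL k // j ≠ 0}

/-- The `p`-norm `‖x‖_{p, ℤ^k}` of a function on all of `ℤ^k`. -/
noncomputable def normFull (k : ℕ) (p : ℝ) (x : ZkL k → ℝ) : ℝ :=
  (∑' j : ZkL k, |x j| ^ p) ^ (1 / p)

/-- The `p`-norm `‖x‖_{p, ℤ^k ∖ {0}}` of a function on `ℤ^k`, restricted to nonzero sites. -/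
noncomputable def normPunct (k : ℕ) (p : ℝ) (x : ZkL k → ℝ) : ℝ :=
  (∑' j : ZkP k, |x j.1| ^ p) ^ (1 / p)

/-- The `p`-norm of a function defined on `ℤ^k ∖ {0}`. -/
noncomputable def norm0 (k : ℕ) (p : ℝ) (x : ZkP k → ℝ) : ℝ :=
  (∑' j : ZkP k, |x j| ^ p) ^ (1 / p)

/-- `γ := ‖Q‖_{(d+1)/2, ℤ^k}`. -/
noncomputable def gam (k d : ℕ) (Q : ZkL k → ℝ) : ℝ := normFull k (((d : ℝ) + 1) / 2) Q

/-- `δ := ‖Q‖_{d+1, ℤ^k ∖ {0}}`. -/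
noncomputable def del (k d : ℕ) (Q : ZkL k → ℝ) : ℝ := normPunct k ((d : ℝ) + 1) Q

/-- Membership in `D`: an element of `ℓ^{d+1}(ℤ^k ∖ {0})` with nonnegative entries. -/
def memD (k d : ℕ) (x : ZkP k → ℝ) : Prop :=
  Summable (fun j : ZkP k => |x j| ^ ((d : ℝ) + 1)) ∧ ∀ j : ZkP k, 0 ≤ x j

/-- The operator `T`:
`T(x)(i) = (Q(i) + Σ_{j≠0} Q(i−j) x(j)^d) / (1 + Σ_{j≠0} Q(j) x(j)^d)`. -/
noncomputable def opT (k d : ℕ) (Q : ZkL k → ℝ) (x : ZkP k → ℝ) (i : ZkL k) : ℝ :=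
  (Q i + ∑' j : ZkP k, Q (i - j.1) * x j ^ d) /
  (1 + ∑' j : ZkP k, Q j.1 * x j ^ d)

/-- The good set `G_d`. -/
def goodSet (d : ℕ) : Set (ℝ × ℝ) :=
  {gd | 1 < gd.1 ∧ 0 < gd.2 ∧ ∃ ε > 0,
    gd.2 + gd.1 * ε ^ d ≤ ε ∧
    2 * d * gd.1 * ε ^ (d - 1) + 2 * d * gd.2 * ε ^ d < 1}

open scoped ENNReal

/-- The `ℓ^p` norm of a real family. The value is junk when `|f|^p` is not summable. -/
def ellNorm {ι : Type*} (p : ℝ) (f : ι → ℝ) : ℝ :=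
  (∑' i, |f i| ^ p) ^ (1 / p)

/-- The `ℓ^p` norm, `0 < p`, of an `ℝ≥0∞`-valued family, equal to `∞` outside `ℓ^p`; the
norm inequalities are proved for it, free of summability hypotheses. -/
def ellENorm {ι : Type*} (p : ℝ) (f : ι → ℝ≥0∞) : ℝ≥0∞ :=
  (∑' i, f i ^ p) ^ (1 / p)

/-- The boundary-law operator `T` on an additive group `G`, acting on families indexed by a set `S`
of sites; it is `opT` when `G = ℤ^k` and `S = ℤ^k ∖ {0}`. -/
def boundaryLawOp {G : Type*} [AddGroup G] {S : Set G} (d : ℕ) (Q : G → ℝ) (x : S → ℝ) (i : G) :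
    ℝ :=
  (Q i + ∑' j : S, Q (i - j) * x j ^ d) / (1 + ∑' j : S, Q j * x j ^ d)

section ENNRealNorm

variable {ι κ : Type*} {p q r : ℝ}

theorem ellENorm_rpow (hp : 0 < p) (f : ι → ℝ≥0∞) : ellENorm p f ^ p = ∑' i, f i ^ p := by
  rw [ellENorm, one_div, ENNReal.rpow_inv_rpow hp.ne']

theorem ellENorm_le_iff (hp : 0 < p) {f : ι → ℝ≥0∞} {C : ℝ≥0∞} :
    ellENorm p f ≤ C ↔ ∑' i, f i ^ p ≤ C ^ p := by
  rw [← ellENorm_rpow hp, ENNReal.rpow_le_rpow_iff hp]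

theorem ellENorm_mono (hp : 0 < p) {f g : ι → ℝ≥0∞} (hfg : ∀ i, f i ≤ g i) :
    ellENorm p f ≤ ellENorm p g := by
  unfold ellENorm
  gcongr with i
  exact hfg i

theorem ellENorm_comp_le_of_injective (hp : 0 < p) {e : ι → κ} (he : Function.Injective e)
    (f : κ → ℝ≥0∞) : ellENorm p (fun i => f (e i)) ≤ ellENorm p f := by
  rw [ellENorm_le_iff hp, ellENorm_rpow hp]
  exact ENNReal.tsum_comp_le_tsum_of_injective he fun j => f j ^ p

theorem ellENorm_pow {d : ℕ} (hd : d ≠ 0) (f : ι → ℝ≥0∞) :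
    ellENorm (r / d) (fun i => f i ^ d) = ellENorm r f ^ d := by
  have hd' : (d : ℝ) ≠ 0 := Nat.cast_ne_zero.2 hd
  simp only [ellENorm, ← ENNReal.rpow_natCast, ← ENNReal.rpow_mul, mul_div_cancel₀ r hd',
    one_div_div, one_div_mul_eq_div]

theorem ellENorm_add_le (hp : 1 ≤ p) (f g : ι → ℝ≥0∞) :
    ellENorm p (fun i => f i + g i) ≤ ellENorm p f + ellENorm p g := by
  let _ : MeasurableSpace ι := ⊤
  simpa [ellENorm, MeasureTheory.lintegral_count] using
    ENNReal.lintegral_Lp_add_le (μ := MeasureTheory.Measure.count)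
      (f := f) (g := g) measurable_from_top.aemeasurable measurable_from_top.aemeasurable hp

theorem tsum_prod_rpow_le_prod_tsum_rpow (s : Finset κ) (f : κ → ι → ℝ≥0∞) {w : κ → ℝ}
    (hw : ∀ k ∈ s, 0 ≤ w k) (hw_sum : ∑ k ∈ s, w k = 1) :
    ∑' i, ∏ k ∈ s, f k i ^ w k ≤ ∏ k ∈ s, (∑' i, f k i) ^ w k := by
  let _ : MeasurableSpace ι := ⊤
  simpa only [MeasureTheory.lintegral_count] using
    ENNReal.lintegral_prod_norm_pow_le (μ := MeasureTheory.Measure.count (α := ι)) s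
      (fun _ _ => measurable_from_top.aemeasurable) hw_sum hw

theorem rpow_one_div_mul_rpow_one_div_sub (hp : 0 < p) (hpr : p ≤ r) (a : ℝ≥0∞) :
    (a ^ p) ^ (1 / r) * (a ^ p) ^ (1 / p - 1 / r) = a := by
  rw [← ENNReal.rpow_add_of_nonneg _ _ (one_div_nonneg.2 (hp.le.trans hpr))
    (sub_nonneg.2 (one_div_le_one_div_of_le hp hpr)), add_sub_cancel, one_div,
    ENNReal.rpow_rpow_inv hp.ne']

theorem rpow_rpow_one_div_sub_rpow (hp : p ≠ 0) (hr : r ≠ 0) (a : ℝ≥0∞) :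
    ((a ^ p) ^ (1 / p - 1 / r)) ^ r = a ^ (r - p) := by
  rw [← ENNReal.rpow_mul, ← ENNReal.rpow_mul]
  congr 1
  field_simp

-- In this and the next two theorems, `p ≤ r` and `q ≤ r` amount to `1 ≤ q` and `1 ≤ p`.
theorem tsum_mul_rpow_le (hp : 0 < p) (hq : 0 < q) (hpr : p ≤ r) (hqr : q ≤ r)
    (hpqr : 1 / p + 1 / q = 1 + 1 / r) (f g : ι → ℝ≥0∞) :
    (∑' i, f i * g i) ^ r ≤
      (∑' i, f i ^ p * g i ^ q) * ellENorm p f ^ (r - p) * ellENorm q g ^ (r - q) := by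
  have hr : 0 < r := hp.trans_le hpr
  have split_mul (i : ι) : (f i ^ p * g i ^ q) ^ (1 / r) * (f i ^ p) ^ (1 / p - 1 / r) *
      (g i ^ q) ^ (1 / q - 1 / r) = f i * g i := by
    rw [ENNReal.mul_rpow_of_nonneg _ _ (one_div_nonneg.2 hr.le), mul_assoc,
      mul_mul_mul_comm, rpow_one_div_mul_rpow_one_div_sub hp hpr,
      rpow_one_div_mul_rpow_one_div_sub hq hqr]
  have holder := tsum_prod_rpow_le_prod_tsum_rpow Finset.univ
    ![fun i => f i ^ p * g i ^ q, fun i => f i ^ p, fun i => g i ^ q]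
    (w := ![1 / r, 1 / p - 1 / r, 1 / q - 1 / r])
    (by
      intro k _
      fin_cases k
      exacts [one_div_nonneg.2 hr.le, sub_nonneg.2 (one_div_le_one_div_of_le hp hpr),
        sub_nonneg.2 (one_div_le_one_div_of_le hq hqr)])
    (by
      simp only [Fin.sum_univ_three, Matrix.cons_val]
      linarith)
  simp only [Fin.prod_univ_three, Matrix.cons_val, split_mul] at holder
  calc (∑' i, f i * g i) ^ r
      ≤ ((∑' i, f i ^ p * g i ^ q) ^ (1 / r) * (∑' i, f i ^ p) ^ (1 / p - 1 / r) *
          (∑' i, g i ^ q) ^ (1 / q - 1 / r)) ^ r := by gcongr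
    _ = (∑' i, f i ^ p * g i ^ q) * ellENorm p f ^ (r - p) * ellENorm q g ^ (r - q) := by
        rw [ENNReal.mul_rpow_of_nonneg _ _ hr.le, ENNReal.mul_rpow_of_nonneg _ _ hr.le,
          ← ellENorm_rpow hp f, ← ellENorm_rpow hq g, rpow_rpow_one_div_sub_rpow hp.ne' hr.ne',
          rpow_rpow_one_div_sub_rpow hq.ne' hr.ne', one_div, ENNReal.rpow_inv_rpow hr.ne']

theorem ellENorm_tsum_kernel_mul_le (hp : 0 < p) (hq : 0 < q) (hpr : p ≤ r) (hqr : q ≤ r)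
    (hpqr : 1 / p + 1 / q = 1 + 1 / r) {K : ι → κ → ℝ≥0∞} {C : ℝ≥0∞}
    (hrow : ∀ i, ellENorm p (K i) ≤ C) (hcol : ∀ j, ellENorm p (fun i => K i j) ≤ C)
    (f : κ → ℝ≥0∞) :
    ellENorm r (fun i => ∑' j, K i j * f j) ≤ C * ellENorm q f := by
  have hr : 0 < r := hp.trans_le hpr
  have sum_kernel : ∑' i, ∑' j, K i j ^ p * f j ^ q ≤ C ^ p * ellENorm q f ^ q := by
    rw [ENNReal.tsum_comm, ellENorm_rpow hq, ← ENNReal.tsum_mul_left]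
    simp only [ENNReal.tsum_mul_right]
    gcongr with j
    exact (ellENorm_le_iff hp).1 (hcol j)
  rw [ellENorm_le_iff hr]
  calc ∑' i, (∑' j, K i j * f j) ^ r
      ≤ ∑' i, (∑' j, K i j ^ p * f j ^ q) * C ^ (r - p) * ellENorm q f ^ (r - q) := by
        gcongr with i
        refine (tsum_mul_rpow_le hp hq hpr hqr hpqr (K i) f).trans ?_
        gcongr
        exact hrow i
    _ ≤ C ^ p * ellENorm q f ^ q * C ^ (r - p) * ellENorm q f ^ (r - q) := by
        rw [ENNReal.tsum_mul_right, ENNReal.tsum_mul_right]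
        gcongr
    _ = (C ^ p * C ^ (r - p)) * (ellENorm q f ^ q * ellENorm q f ^ (r - q)) := by ring
    _ = (C * ellENorm q f) ^ r := by
        rw [← ENNReal.rpow_add_of_nonneg _ _ hp.le (sub_nonneg.2 hpr),
          ← ENNReal.rpow_add_of_nonneg _ _ hq.le (sub_nonneg.2 hqr), add_sub_cancel,
          add_sub_cancel, ENNReal.mul_rpow_of_nonneg _ _ hr.le]

theorem ellENorm_convolution_le {G : Type*} [AddGroup G] {S : Set G} (hp : 0 < p) (hq : 0 < q)
    (hpr : p ≤ r) (hqr : q ≤ r) (hpqr : 1 / p + 1 / q = 1 + 1 / r) (g : G → ℝ≥0∞)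
    (f : S → ℝ≥0∞) :
    ellENorm r (fun i : G => ∑' j : S, g (i - j) * f j) ≤ ellENorm p g * ellENorm q f :=
  ellENorm_tsum_kernel_mul_le hp hq hpr hqr hpqr
    (fun _ => ellENorm_comp_le_of_injective hp
      (sub_right_injective.comp Subtype.val_injective) g)
    (fun _ => ellENorm_comp_le_of_injective hp sub_left_injective g) f

end ENNRealNorm

section RealNorm

variable {ι : Type*} {p q : ℝ} {f : ι → ℝ}

theorem ellNorm_nonneg : 0 ≤ ellNorm p f := by
  unfold ellNorm
  positivity

theorem ofReal_abs_rpow (hp : 0 < p) (a : ℝ) : ENNReal.ofReal (|a| ^ p) = ‖a‖ₑ ^ p := by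
  rw [Real.enorm_eq_ofReal_abs, ENNReal.ofReal_rpow_of_nonneg (abs_nonneg a) hp.le]

theorem ofReal_ellNorm (hp : 0 < p) (hf : Summable fun i => |f i| ^ p) :
    ENNReal.ofReal (ellNorm p f) = ellENorm p fun i => ‖f i‖ₑ := by
  have abs_rpow_nonneg (i : ι) : 0 ≤ |f i| ^ p := by positivity
  simp only [ellNorm, ellENorm, ← ofReal_abs_rpow hp]
  rw [← ENNReal.ofReal_rpow_of_nonneg (tsum_nonneg abs_rpow_nonneg) (one_div_nonneg.2 hp.le),
    ENNReal.ofReal_tsum_of_nonneg abs_rpow_nonneg hf]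

theorem summable_abs_rpow_of_ellENorm_ne_top (hp : 0 < p)
    (hf : ellENorm p (fun i => ‖f i‖ₑ) ≠ ∞) : Summable fun i => |f i| ^ p := by
  have tsum_ne_top : ∑' i, ENNReal.ofReal (|f i| ^ p) ≠ ∞ := by
    simp only [ofReal_abs_rpow hp, ← ellENorm_rpow hp]
    exact ENNReal.rpow_ne_top_of_nonneg hp.le hf
  refine (ENNReal.summable_toReal tsum_ne_top).congr fun i => ?_
  exact ENNReal.toReal_ofReal (by positivity)

theorem summable_abs_rpow_of_le (hp : 0 < p) (hpq : p ≤ q)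
    (hf : Summable fun i => |f i| ^ p) : Summable fun i => |f i| ^ q := by
  have toReal_ofReal {s : ℝ} (hs : p ≤ s) : (ENNReal.ofReal s).toReal = s :=
    ENNReal.toReal_ofReal (hp.le.trans hs)
  have memℓp : Memℓp f (ENNReal.ofReal p) := memℓp_gen (by simpa [toReal_ofReal le_rfl] using hf)
  have toReal_pos : 0 < (ENNReal.ofReal q).toReal := by
    rw [toReal_ofReal hpq]
    exact hp.trans_le hpq
  simpa [toReal_ofReal hpq] using
    (memℓp_gen_iff toReal_pos).1 (memℓp.of_exponent_ge (ENNReal.ofReal_le_ofReal hpq))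

end RealNorm

section BoundaryLaw

variable {G : Type*} [AddGroup G] {S : Set G} {d : ℕ} {Q : G → ℝ} {x : S → ℝ}

theorem enorm_boundaryLawOp_le (hQ : ∀ j : S, 0 ≤ Q j) (hx : ∀ j, 0 ≤ x j) (i : G) :
    ‖boundaryLawOp d Q x i‖ₑ ≤ ‖Q i‖ₑ + ∑' j : S, ‖Q (i - j)‖ₑ * ‖x j‖ₑ ^ d := by
  have one_le_denom : 1 ≤ 1 + ∑' j : S, Q j * x j ^ d :=
    le_add_of_nonneg_right (tsum_nonneg fun j => mul_nonneg (hQ j) (pow_nonneg (hx j) d))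
  calc ‖boundaryLawOp d Q x i‖ₑ
      ≤ ‖Q i + ∑' j : S, Q (i - j) * x j ^ d‖ₑ := by
        rw [enorm_le_iff_norm_le, boundaryLawOp, norm_div]
        exact div_le_self (norm_nonneg _) (one_le_denom.trans (Real.le_norm_self _))
    _ ≤ ‖Q i‖ₑ + ∑' j : S, ‖Q (i - j) * x j ^ d‖ₑ :=
        (enorm_add_le _ _).trans (by gcongr; exact enorm_tsum_le_tsum_enorm)
    _ = ‖Q i‖ₑ + ∑' j : S, ‖Q (i - j)‖ₑ * ‖x j‖ₑ ^ d := by simp only [enorm_mul, enorm_pow]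

theorem ellENorm_boundaryLawOp_le (hd : 1 ≤ d) (hQ : ∀ j : S, 0 ≤ Q j) (hx : ∀ j, 0 ≤ x j) :
    ellENorm (d + 1) (fun i : S => ‖boundaryLawOp d Q x i‖ₑ) ≤
      ellENorm (d + 1) (fun i : S => ‖Q i‖ₑ) +
        ellENorm ((d + 1) / 2) (fun i => ‖Q i‖ₑ) * ellENorm (d + 1) (fun j => ‖x j‖ₑ) ^ d := by
  have hd' : (1 : ℝ) ≤ d := by exact_mod_cast hd
  have young : ellENorm (d + 1) (fun i : G => ∑' j : S, ‖Q (i - j)‖ₑ * ‖x j‖ₑ ^ d) ≤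
      ellENorm ((d + 1) / 2) (fun i => ‖Q i‖ₑ) *
        ellENorm ((d + 1) / d) (fun j => ‖x j‖ₑ ^ d) :=
    ellENorm_convolution_le (by positivity) (by positivity) (half_le_self (by positivity))
      (div_le_self (by positivity) hd') (by field_simp; ring) (fun i => ‖Q i‖ₑ) _
  calc ellENorm (d + 1) (fun i : S => ‖boundaryLawOp d Q x i‖ₑ)
      ≤ ellENorm (d + 1) (fun i : S => ‖Q i‖ₑ + ∑' j : S, ‖Q (i - j)‖ₑ * ‖x j‖ₑ ^ d) :=
        ellENorm_mono (by positivity) fun i => enorm_boundaryLawOp_le hQ hx i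
    _ ≤ ellENorm (d + 1) (fun i : S => ‖Q i‖ₑ) +
          ellENorm (d + 1) (fun i : S => ∑' j : S, ‖Q (i - j)‖ₑ * ‖x j‖ₑ ^ d) :=
        ellENorm_add_le (le_add_of_nonneg_left d.cast_nonneg) _ _
    _ ≤ ellENorm (d + 1) (fun i : S => ‖Q i‖ₑ) +
          ellENorm ((d + 1) / 2) (fun i => ‖Q i‖ₑ) * ellENorm (d + 1) (fun j => ‖x j‖ₑ) ^ d := by
        rw [← ellENorm_pow (Nat.one_le_iff_ne_zero.1 hd)]
        gcongr
        exact (ellENorm_comp_le_of_injective (by positivity) Subtype.val_injective _).trans young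

theorem stmt0_general (hd : 1 ≤ d) (hQ : ∀ j : S, 0 ≤ Q j)
    (hQsum : Summable fun i => |Q i| ^ (((d : ℝ) + 1) / 2))
    (hxsum : Summable fun j => |x j| ^ ((d : ℝ) + 1)) (hx : ∀ j, 0 ≤ x j) :
    Summable (fun i : S => |boundaryLawOp d Q x i| ^ ((d : ℝ) + 1)) ∧
      ellNorm (d + 1) (fun i : S => boundaryLawOp d Q x i) ≤
        ellNorm (d + 1) (fun i : S => Q i) + ellNorm ((d + 1) / 2) Q * ellNorm (d + 1) x ^ d := by
  have hr : (0 : ℝ) < d + 1 := by positivity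
  have hQsum' : Summable fun i : S => |Q i| ^ ((d : ℝ) + 1) :=
    (summable_abs_rpow_of_le (by positivity) (half_le_self hr.le) hQsum).subtype S
  have bound_nonneg : 0 ≤ ellNorm ((d + 1) / 2) Q * ellNorm (d + 1) x ^ d :=
    mul_nonneg ellNorm_nonneg (pow_nonneg ellNorm_nonneg d)
  have enorm_bound := ellENorm_boundaryLawOp_le hd hQ hx
  rw [← ofReal_ellNorm hr hQsum', ← ofReal_ellNorm (by positivity) hQsum,
    ← ofReal_ellNorm hr hxsum, ← ENNReal.ofReal_pow ellNorm_nonneg,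
    ← ENNReal.ofReal_mul ellNorm_nonneg, ← ENNReal.ofReal_add ellNorm_nonneg bound_nonneg]
    at enorm_bound
  have hTsum := summable_abs_rpow_of_ellENorm_ne_top hr
    (ne_top_of_le_ne_top ENNReal.ofReal_ne_top enorm_bound)
  rw [← ofReal_ellNorm hr hTsum,
    ENNReal.ofReal_le_ofReal_iff (add_nonneg ellNorm_nonneg bound_nonneg)] at enorm_bound
  exact ⟨hTsum, enorm_bound⟩

end BoundaryLaw

/-- Lemma 5.2 / lem:ineq: norm bound for the boundary-law operator `T`.
If `‖Q‖_{(d+1)/2,ℤ^k} < ∞` then for every nonnegative `x ∈ ℓ^{d+1}(ℤ^k∖{0})`,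
`‖T(x)‖_{d+1,ℤ^k∖{0}} ≤ ‖Q‖_{d+1,ℤ^k∖{0}} + ‖Q‖_{(d+1)/2,ℤ^k} ‖x‖_{d+1,ℤ^k∖{0}}^d < ∞`;
in particular `T(x) ∈ ℓ^{d+1}(ℤ^k∖{0})`. -/
theorem stmt0 (k d : ℕ) (hk : 1 ≤ k) (hd : 2 ≤ d)
    (Q : ZkL k → ℝ) (hQpos : ∀ j, 0 < Q j) (hQ0 : Q 0 = 1)
    (hQsum : Summable fun j : ZkL k => |Q j| ^ (((d : ℝ) + 1) / 2))
    (x : ZkP k → ℝ) (hx : memD k d x) :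
    Summable (fun j : ZkP k => |opT k d Q x j.1| ^ ((d : ℝ) + 1)) ∧
    norm0 k ((d : ℝ) + 1) (fun j : ZkP k => opT k d Q x j.1) ≤
      del k d Q + gam k d Q * (norm0 k ((d : ℝ) + 1) x) ^ d :=
  stmt0_general (S := {j | j ≠ 0}) (by omega) (fun j => (hQpos j).le) hQsum hx.1 hx.2
end
end

section
/- Pointwise Lipschitz estimate for T (Lemma lem:Lipschitz): Assume ‖Q‖_{(d+1)/2,ℤ^k} < ∞. For all x, y ∈ D and every i ∈ ℤ^k∖{0}, |T(x)(i) − T(y)(i)| ≤ Σ_{j∈ℤ^k∖{0}} Q(i−j) |x(j)^d − y(j)^d| + (Σ_{l∈ℤ^k∖{0}} Q(l) |x(l)^d − y(l)^d|) · (Q(i) + Σ_{j∈ℤ^k∖{0}} Q(i−j) y(j)^d). -/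
/-!
Write `T(x)(i) = a/A` and `T(y)(i) = b/B`. Both denominators are at least `1`, so
`a/A - b/B = (a - b)/A + b (B - A)/(A B)` yields `|a/A - b/B| ≤ |a - b| + |A - B| |b|`, and the
triangle inequality for series bounds `|a - b|` and `|A - B|` term by term. All the series
converge because `q x^d ≤ q^{d+1} + x^{d+1}` and `Q ∈ ℓ^{(d+1)/2} ⊆ ℓ^{d+1}`; the latter space is
stable under the reflected translation `j ↦ i - j` and under restriction to a set of sites.
-/

open scoped BigOperators
open Filter Topology

noncomputable section

section Inequalities

lemma pow_mul_pow_le_pow_add_add_pow_add {R : Type*} [CommSemiring R] [LinearOrder R]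
    [IsStrictOrderedRing R] {a b : R} (ha : 0 ≤ a) (hb : 0 ≤ b) (m n : ℕ) :
    a ^ m * b ^ n ≤ a ^ (m + n) + b ^ (m + n) := by
  rcases le_total a b with hab | hba
  · calc a ^ m * b ^ n ≤ b ^ m * b ^ n := by gcongr
      _ = b ^ (m + n) := (pow_add b m n).symm
      _ ≤ a ^ (m + n) + b ^ (m + n) := le_add_of_nonneg_left (pow_nonneg ha _)
  · calc a ^ m * b ^ n ≤ a ^ m * a ^ n := by gcongr
      _ = a ^ (m + n) := (pow_add a m n).symm
      _ ≤ a ^ (m + n) + b ^ (m + n) := le_add_of_nonneg_right (pow_nonneg hb _)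

lemma abs_div_sub_div_le {K : Type*} [Field K] [LinearOrder K] [IsStrictOrderedRing K]
    {a b A B : K} (hA : 1 ≤ A) (hB : 1 ≤ B) :
    |a / A - b / B| ≤ |a - b| + |A - B| * |b| := by
  have hA₀ : 0 < A := zero_lt_one.trans_le hA
  have hB₀ : 0 < B := zero_lt_one.trans_le hB
  have hAB : 1 ≤ A * B := one_le_mul_of_one_le_of_one_le hA hB
  calc |a / A - b / B| = |(a - b) / A + (B - A) * b / (A * B)| := by
        congr 1
        field_simp
        ring
    _ ≤ |(a - b) / A| + |(B - A) * b / (A * B)| := abs_add_le _ _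
    _ = |a - b| / A + |A - B| * |b| / (A * B) := by
        rw [abs_div, abs_div, abs_mul, abs_of_pos hA₀, abs_of_pos (mul_pos hA₀ hB₀), abs_sub_comm B]
    _ ≤ |a - b| + |A - B| * |b| :=
        add_le_add (div_le_self (abs_nonneg _) hA) (div_le_self (by positivity) hAB)

end Inequalities

section Series

variable {ι : Type*}

lemma summable_norm_rpow_of_exponent_ge {E : Type*} [NormedAddCommGroup E] {f : ι → E} {p q : ℝ}
    (hp : 0 < p) (hpq : p ≤ q) (hf : Summable fun j => ‖f j‖ ^ p) :
    Summable fun j => ‖f j‖ ^ q := by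
  have hq : 0 < q := hp.trans_le hpq
  have hfp : Memℓp f (ENNReal.ofReal p) := memℓp_gen (by rwa [ENNReal.toReal_ofReal hp.le])
  have hfq : Memℓp f (ENNReal.ofReal q) := hfp.of_exponent_ge (ENNReal.ofReal_le_ofReal hpq)
  have htoReal : (ENNReal.ofReal q).toReal = q := ENNReal.toReal_ofReal hq.le
  simpa only [htoReal] using hfq.summable (htoReal.symm ▸ hq)

lemma summable_pow_mul_pow {f g : ι → ℝ} {m n : ℕ} (hf : ∀ j, 0 ≤ f j) (hg : ∀ j, 0 ≤ g j)
    (hfs : Summable fun j => f j ^ (m + n)) (hgs : Summable fun j => g j ^ (m + n)) :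
    Summable fun j => f j ^ m * g j ^ n :=
  .of_nonneg_of_le (fun j => mul_nonneg (pow_nonneg (hf j) m) (pow_nonneg (hg j) n))
    (fun j => pow_mul_pow_le_pow_add_add_pow_add (hf j) (hg j) m n) (hfs.add hgs)

lemma abs_tsum_mul_sub_tsum_mul_le {q u v : ι → ℝ} (hq : ∀ j, 0 ≤ q j)
    (hu : Summable fun j => q j * u j) (hv : Summable fun j => q j * v j) :
    |∑' j, q j * u j - ∑' j, q j * v j| ≤ ∑' j, q j * |u j - v j| :=
  calc |∑' j, q j * u j - ∑' j, q j * v j| = |∑' j, (q j * u j - q j * v j)| := by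
        rw [hu.tsum_sub hv]
    _ ≤ ∑' j, |q j * u j - q j * v j| := norm_tsum_le_tsum_norm (hu.sub hv).norm
    _ = ∑' j, q j * |u j - v j| :=
        tsum_congr fun j => by rw [← mul_sub, abs_mul, abs_of_nonneg (hq j)]

lemma abs_add_tsum_div_sub_add_tsum_div_le {c : ℝ} {q w u v : ι → ℝ} (hc : 0 ≤ c)
    (hq : ∀ j, 0 ≤ q j) (hw : ∀ j, 0 ≤ w j) (hu : ∀ j, 0 ≤ u j) (hv : ∀ j, 0 ≤ v j)
    (hqu : Summable fun j => q j * u j) (hqv : Summable fun j => q j * v j)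
    (hwu : Summable fun j => w j * u j) (hwv : Summable fun j => w j * v j) :
    |(c + ∑' j, q j * u j) / (1 + ∑' j, w j * u j) -
        (c + ∑' j, q j * v j) / (1 + ∑' j, w j * v j)| ≤
      ∑' j, q j * |u j - v j| + (∑' j, w j * |u j - v j|) * (c + ∑' j, q j * v j) := by
  have one_le_denom {z : ι → ℝ} (hz : ∀ j, 0 ≤ z j) : 1 ≤ 1 + ∑' j, w j * z j :=
    le_add_of_nonneg_right (tsum_nonneg fun j => mul_nonneg (hw j) (hz j))
  have num_nonneg : 0 ≤ c + ∑' j, q j * v j :=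
    add_nonneg hc (tsum_nonneg fun j => mul_nonneg (hq j) (hv j))
  refine (abs_div_sub_div_le (one_le_denom hu) (one_le_denom hv)).trans ?_
  rw [add_sub_add_left_eq_sub, add_sub_add_left_eq_sub, abs_of_nonneg num_nonneg]
  gcongr
  · exact abs_tsum_mul_sub_tsum_mul_le hq hqu hqv
  · exact abs_tsum_mul_sub_tsum_mul_le hw hwu hwv

end Series

lemma summable_comp_mul_pow {G ι : Type*} {d : ℕ} {Q : G → ℝ} {z : ι → ℝ} {e : ι → G}
    (he : e.Injective) (hQ : ∀ g, 0 ≤ Q g) (hQs : Summable fun g => Q g ^ (d + 1))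
    (hz : ∀ j, 0 ≤ z j) (hzs : Summable fun j => z j ^ (d + 1)) :
    Summable fun j => Q (e j) * z j ^ d := by
  rw [add_comm] at hQs hzs
  simpa only [pow_one] using
    summable_pow_mul_pow (m := 1) (fun j => hQ (e j)) hz (hQs.comp_injective he) hzs

lemma summable_pow_succ_of_summable_abs_rpow {ι : Type*} {d : ℕ} {f : ι → ℝ} {p : ℝ} (hp : 0 < p)
    (hpd : p ≤ d + 1) (hf : ∀ j, 0 ≤ f j) (hfs : Summable fun j => |f j| ^ p) :
    Summable fun j => f j ^ (d + 1) := by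
  refine (summable_norm_rpow_of_exponent_ge (f := f) hp hpd hfs).congr fun j => ?_
  rw [Real.norm_of_nonneg (hf j), ← Nat.cast_succ, Real.rpow_natCast]

lemma memD.summable_pow_succ {k d : ℕ} {x : ZkP k → ℝ} (hx : memD k d x) :
    Summable fun j => x j ^ (d + 1) :=
  summable_pow_succ_of_summable_abs_rpow (p := d + 1) (by positivity) le_rfl hx.2 hx.1

theorem stmt1_general {G : Type*} [AddGroup G] {S : Set G} {d : ℕ} {Q : G → ℝ} {x y : S → ℝ}
    (hQ : ∀ g, 0 ≤ Q g) (hQs : Summable fun g => Q g ^ (d + 1))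
    (hx : ∀ j, 0 ≤ x j) (hxs : Summable fun j => x j ^ (d + 1))
    (hy : ∀ j, 0 ≤ y j) (hys : Summable fun j => y j ^ (d + 1)) (i : G) :
    |(Q i + ∑' j : S, Q (i - j) * x j ^ d) / (1 + ∑' j : S, Q j * x j ^ d) -
        (Q i + ∑' j : S, Q (i - j) * y j ^ d) / (1 + ∑' j : S, Q j * y j ^ d)| ≤
      (∑' j : S, Q (i - j) * |x j ^ d - y j ^ d|) +
      (∑' l : S, Q l * |x l ^ d - y l ^ d|) * (Q i + ∑' j : S, Q (i - j) * y j ^ d) := by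
  have translate_injective : (fun j : S => i - (j : G)).Injective :=
    sub_right_injective.comp Subtype.val_injective
  exact abs_add_tsum_div_sub_add_tsum_div_le (hQ i) (fun j => hQ (i - j)) (fun j => hQ j)
    (fun j => pow_nonneg (hx j) d) (fun j => pow_nonneg (hy j) d)
    (summable_comp_mul_pow translate_injective hQ hQs hx hxs)
    (summable_comp_mul_pow translate_injective hQ hQs hy hys)
    (summable_comp_mul_pow Subtype.val_injective hQ hQs hx hxs)
    (summable_comp_mul_pow Subtype.val_injective hQ hQs hy hys)

/-- Lemma lem:Lipschitz: pointwise Lipschitz estimate for `T`.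
For `x, y ∈ D` and every `i ∈ ℤ^k ∖ {0}`,
`|T(x)(i) − T(y)(i)| ≤ Σ_{j≠0} Q(i−j)|x(j)^d − y(j)^d|
  + (Σ_{l≠0} Q(l)|x(l)^d − y(l)^d|)(Q(i) + Σ_{j≠0} Q(i−j) y(j)^d)`. -/
theorem stmt1 (k d : ℕ) (hk : 1 ≤ k) (hd : 2 ≤ d)
    (Q : ZkL k → ℝ) (hQpos : ∀ j, 0 < Q j) (hQ0 : Q 0 = 1)
    (hQsum : Summable fun j : ZkL k => |Q j| ^ (((d : ℝ) + 1) / 2))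
    (x y : ZkP k → ℝ) (hx : memD k d x) (hy : memD k d y)
    (i : ZkL k) (hi : i ≠ 0) :
    |opT k d Q x i - opT k d Q y i| ≤
      (∑' j : ZkP k, Q (i - j.1) * |x j ^ d - y j ^ d|) +
      (∑' l : ZkP k, Q l.1 * |x l ^ d - y l ^ d|) *
        (Q i + ∑' j : ZkP k, Q (i - j.1) * y j ^ d) :=
  have hQ (j : ZkL k) : 0 ≤ Q j := (hQpos j).le
  stmt1_general (S := {j | j ≠ 0}) hQ
    (summable_pow_succ_of_summable_abs_rpow (by positivity) (half_le_self (by positivity)) hQ hQsum)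
    hx.2 hx.summable_pow_succ hy.2 hy.summable_pow_succ i
end
end

section
/- Lipschitz continuity of T on the invariant ball (Proposition 2.8, part 2): Set γ := ‖Q‖_{(d+1)/2,ℤ^k} and δ := ‖Q‖_{d+1,ℤ^k∖{0}}, assumed finite. If ε > 0 satisfies δ + γ ε^d ≤ ε, then for all x, y ∈ D with ‖x‖_{d+1,ℤ^k∖{0}} ≤ ε and ‖y‖_{d+1,ℤ^k∖{0}} ≤ ε one has ‖T(x) − T(y)‖_{d+1,ℤ^k∖{0}} ≤ 2d (γ ε^{d−1} + δ ε^d) · ‖x − y‖_{d+1,ℤ^k∖{0}}. -/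
/-!
With `p = d + 1`, write `T z = N_z / M_z`, where `M_z ≥ 1`. The identity
`T x - T y = (N_x - N_y) / M_x - T y * (M_x - M_y) / M_x` bounds `|T x - T y|` pointwise by the
convolution of `Q` with `|x^d - y^d|` plus `|T y|` times the constant `∑ Q |x^d - y^d|`. Young's
inequality bounds the `ℓ^p` norm of the former by `γ ‖x^d - y^d‖_{p/d}`, Hölder's inequality bounds
the constant by `δ ‖x^d - y^d‖_{p/d}`, and `‖T y‖_p ≤ δ + γ ε^d ≤ ε`. Finally
`x^d - y^d = ∑_{m<d} (x - y) x^m y^{d-1-m}`, so Minkowski and the `d`-factor Hölder inequality give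
`‖x^d - y^d‖_{p/d} ≤ d ε^{d-1} ‖x - y‖_p`. This yields the Lipschitz constant
`d (γ ε^{d-1} + δ ε^d)`, half of the one claimed.

Norms are computed in `ℝ≥0∞`, so that convergence matters only in passing to and from `ℝ`.
-/

open scoped BigOperators
open Filter Topology

noncomputable section

open scoped ENNReal

/-- The `ℓ^p` norm of an extended-nonnegative-valued family, with value `∞` when the sum
diverges. -/
def epNorm {α : Type*} (p : ℝ) (f : α → ℝ≥0∞) : ℝ≥0∞ := (∑' a, f a ^ p) ^ p⁻¹

/-- The `ℓ^p` norm of a real family, with junk value `0` (for `0 < p`) when the sum diverges. It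
unfolds to `norm0`, `normFull` and `normPunct` on the respective index types. -/
def pNorm {α : Type*} (p : ℝ) (x : α → ℝ) : ℝ := (∑' a, |x a| ^ p) ^ (1 / p)

section ExtendedNorm

variable {α β ι 𝕜 : Type*} {p q r : ℝ}

lemma rpow_mul_rpow_sub (x : ℝ≥0∞) (hp : 0 ≤ p) (hpq : p ≤ q) : x ^ p * x ^ (q - p) = x ^ q := by
  rw [← ENNReal.rpow_add_of_nonneg _ _ hp (sub_nonneg.2 hpq), add_sub_cancel]

lemma epNorm_le_iff (hp : 0 < p) {f : α → ℝ≥0∞} {c : ℝ≥0∞} :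
    epNorm p f ≤ c ↔ ∑' a, f a ^ p ≤ c ^ p :=
  ENNReal.rpow_inv_le_iff hp

lemma epNorm_rpow_self (hp : p ≠ 0) (f : α → ℝ≥0∞) : epNorm p f ^ p = ∑' a, f a ^ p :=
  ENNReal.rpow_inv_rpow hp _

lemma epNorm_mono (hp : 0 ≤ p) {f g : α → ℝ≥0∞} (h : ∀ a, f a ≤ g a) :
    epNorm p f ≤ epNorm p g := by
  unfold epNorm
  gcongr with a
  exact h a

lemma le_epNorm (hp : 0 < p) (f : α → ℝ≥0∞) (a : α) : f a ≤ epNorm p f :=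
  (ENNReal.le_rpow_inv_iff hp).2 (ENNReal.le_tsum a)

lemma epNorm_mul_const (hp : 0 < p) (f : α → ℝ≥0∞) (c : ℝ≥0∞) :
    epNorm p (fun a => f a * c) = epNorm p f * c := by
  simp only [epNorm, ENNReal.mul_rpow_of_nonneg _ _ hp.le, ENNReal.tsum_mul_right,
    ENNReal.mul_rpow_of_nonneg _ _ (inv_nonneg.2 hp.le), ENNReal.rpow_rpow_inv hp.ne']

lemma epNorm_comp_le_of_injective (hp : 0 ≤ p) {φ : β → α} (hφ : φ.Injective) (f : α → ℝ≥0∞) :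
    epNorm p (fun b => f (φ b)) ≤ epNorm p f :=
  ENNReal.rpow_le_rpow (ENNReal.tsum_comp_le_tsum_of_injective hφ fun a => f a ^ p)
    (inv_nonneg.2 hp)

lemma epNorm_le_epNorm_of_exponent_le (hp : 0 < p) (hpq : p ≤ q) (f : α → ℝ≥0∞) :
    epNorm q f ≤ epNorm p f := by
  rw [epNorm_le_iff (hp.trans_le hpq)]
  calc ∑' a, f a ^ q = ∑' a, f a ^ p * f a ^ (q - p) := by
        simp only [rpow_mul_rpow_sub _ hp.le hpq]
    _ ≤ ∑' a, f a ^ p * epNorm p f ^ (q - p) := by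
        gcongr with a
        exact le_epNorm hp f a
    _ = epNorm p f ^ q := by
        rw [ENNReal.tsum_mul_right, ← epNorm_rpow_self hp.ne', rpow_mul_rpow_sub _ hp.le hpq]

/-! ### Minkowski and Hölder -/

lemma epNorm_add_le (hp : 1 ≤ p) (f g : α → ℝ≥0∞) :
    epNorm p (f + g) ≤ epNorm p f + epNorm p g := by
  let _ : MeasurableSpace α := ⊤
  simpa only [epNorm, MeasureTheory.lintegral_count, one_div] using
    ENNReal.lintegral_Lp_add_le (μ := MeasureTheory.Measure.count) (f := f) (g := g)
      measurable_from_top.aemeasurable measurable_from_top.aemeasurable hp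

lemma tsum_mul_le_epNorm_mul_epNorm (hpq : p.HolderConjugate q) (f g : α → ℝ≥0∞) :
    ∑' a, f a * g a ≤ epNorm p f * epNorm q g := by
  let _ : MeasurableSpace α := ⊤
  simpa only [epNorm, MeasureTheory.lintegral_count, Pi.mul_apply, one_div] using
    ENNReal.lintegral_mul_le_Lp_mul_Lq MeasureTheory.Measure.count hpq (f := f) (g := g)
      measurable_from_top.aemeasurable measurable_from_top.aemeasurable

lemma tsum_prod_rpow_le (s : Finset ι) (f : ι → α → ℝ≥0∞) {w : ι → ℝ} (hw : ∑ i ∈ s, w i = 1)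
    (hw₀ : ∀ i ∈ s, 0 ≤ w i) :
    ∑' a, ∏ i ∈ s, f i a ^ w i ≤ ∏ i ∈ s, (∑' a, f i a) ^ w i := by
  let _ : MeasurableSpace α := ⊤
  simpa only [MeasureTheory.lintegral_count] using
    ENNReal.lintegral_prod_norm_pow_le (μ := MeasureTheory.Measure.count) s
      (fun i _ => measurable_from_top.aemeasurable (f := f i)) hw hw₀

lemma epNorm_prod_pow_le (hp : 0 < p) {d : ℕ} (hd : d ≠ 0) (s : Finset ι) {n : ι → ℕ}
    (hn : ∑ i ∈ s, n i = d) (f : ι → α → ℝ≥0∞) :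
    epNorm (p / d) (fun a => ∏ i ∈ s, f i a ^ n i) ≤ ∏ i ∈ s, epNorm p (f i) ^ n i := by
  have hd₀ : (0 : ℝ) < d := by positivity
  have hw : ∑ i ∈ s, (n i : ℝ) / d = 1 := by
    rw [← Finset.sum_div, ← Nat.cast_sum, hn, div_self hd₀.ne']
  have rpow_swap (x : ℝ≥0∞) (i : ι) : (x ^ n i) ^ (p / d) = (x ^ p) ^ ((n i : ℝ) / d) := by
    rw [← ENNReal.rpow_natCast, ← ENNReal.rpow_mul, ← ENNReal.rpow_mul]
    congr 1
    ring
  rw [epNorm_le_iff (by positivity)]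
  simp only [← ENNReal.prod_rpow_of_nonneg (div_pos hp hd₀).le, rpow_swap,
    epNorm_rpow_self hp.ne']
  exact tsum_prod_rpow_le s (fun i a => f i a ^ p) hw fun i _ => by positivity

lemma epNorm_pow_le (hp : 0 < p) {d : ℕ} (hd : d ≠ 0) (f : α → ℝ≥0∞) :
    epNorm (p / d) (fun a => f a ^ d) ≤ epNorm p f ^ d := by
  simpa using epNorm_prod_pow_le hp hd {()} (n := fun _ => d) (by simp) fun _ => f

lemma epNorm_mul_pow_mul_pow_le (hp : 0 < p) {d m n : ℕ} (hd : 1 + m + n = d)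
    (f g h : α → ℝ≥0∞) :
    epNorm (p / d) (fun a => f a * g a ^ m * h a ^ n) ≤
      epNorm p f * epNorm p g ^ m * epNorm p h ^ n := by
  simpa [Fin.prod_univ_three] using epNorm_prod_pow_le hp (by omega) Finset.univ
    (n := ![1, m, n]) (by simpa [Fin.sum_univ_three] using hd) ![f, g, h]

/-! ### Young's inequality -/

/-- The weighted Hölder inequality applied to
`K f = (K^p f^q)^(1/r) * (K^p)^(1/p - 1/r) * (f^q)^(1/q - 1/r)`. -/
lemma tsum_mul_rpow_le_s3 (hp : 1 ≤ p) (hq : 1 ≤ q) (hr : 0 < r) (h : p⁻¹ + q⁻¹ = 1 + r⁻¹)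
    (K f : α → ℝ≥0∞) :
    (∑' a, K a * f a) ^ r ≤
      (∑' a, K a ^ p * f a ^ q) * epNorm p K ^ (r - p) * epNorm q f ^ (r - q) := by
  have hp₀ : 0 < p := by linarith
  have hq₀ : 0 < q := by linarith
  have hpr : 0 ≤ p⁻¹ - r⁻¹ := by linarith [inv_le_one_of_one_le₀ hq]
  have hqr : 0 ≤ q⁻¹ - r⁻¹ := by linarith [inv_le_one_of_one_le₀ hp]
  have factor (a : α) : K a * f a =
      (K a ^ p * f a ^ q) ^ r⁻¹ * (K a ^ p) ^ (p⁻¹ - r⁻¹) * (f a ^ q) ^ (q⁻¹ - r⁻¹) := by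
    have split {t : ℝ} (ht : 0 < t) (htr : 0 ≤ t⁻¹ - r⁻¹) (x : ℝ≥0∞) :
        (x ^ t) ^ r⁻¹ * (x ^ t) ^ (t⁻¹ - r⁻¹) = x := by
      rw [rpow_mul_rpow_sub _ (by positivity) (sub_nonneg.1 htr), ENNReal.rpow_rpow_inv ht.ne']
    rw [ENNReal.mul_rpow_of_nonneg _ _ (inv_nonneg.2 hr.le)]
    conv_lhs => rw [← split hp₀ hpr (K a), ← split hq₀ hqr (f a)]
    ring
  have holder : ∑' a, K a * f a ≤ (∑' a, K a ^ p * f a ^ q) ^ r⁻¹ *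
      (∑' a, K a ^ p) ^ (p⁻¹ - r⁻¹) * (∑' a, f a ^ q) ^ (q⁻¹ - r⁻¹) := by
    simpa [Fin.prod_univ_three, ← factor] using tsum_prod_rpow_le Finset.univ
      ![fun a => K a ^ p * f a ^ q, fun a => K a ^ p, fun a => f a ^ q]
      (w := ![r⁻¹, p⁻¹ - r⁻¹, q⁻¹ - r⁻¹])
      (by simp [Fin.sum_univ_three]; linarith)
      (by simp [Fin.forall_fin_succ, hr.le, sub_nonneg.1 hpr, sub_nonneg.1 hqr])
  have exponent {t : ℝ} (ht : 0 < t) : (t⁻¹ - r⁻¹) * r = t⁻¹ * (r - t) := by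
    field_simp
  refine (ENNReal.rpow_le_rpow holder hr.le).trans_eq ?_
  rw [ENNReal.mul_rpow_of_nonneg _ _ hr.le, ENNReal.mul_rpow_of_nonneg _ _ hr.le,
    ENNReal.rpow_inv_rpow hr.ne', epNorm, epNorm]
  simp only [← ENNReal.rpow_mul, exponent hp₀, exponent hq₀]

/-- Young's inequality for an integral kernel, as in Schur's test: the `ℓ^p` norms of the rows and
columns play the role of the `ℓ^p` norm of a convolution kernel. -/
lemma epNorm_tsum_mul_le (hp : 1 ≤ p) (hq : 1 ≤ q) (hr : 0 < r) (h : p⁻¹ + q⁻¹ = 1 + r⁻¹)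
    {K : β → α → ℝ≥0∞} {C : ℝ≥0∞} (hrow : ∀ b, epNorm p (K b) ≤ C)
    (hcol : ∀ a, epNorm p (fun b => K b a) ≤ C) (f : α → ℝ≥0∞) :
    epNorm r (fun b => ∑' a, K b a * f a) ≤ C * epNorm q f := by
  have hp₀ : 0 < p := by linarith
  have hq₀ : 0 < q := by linarith
  have hpr : p ≤ r := (inv_le_inv₀ hr hp₀).1 (by linarith [inv_le_one_of_one_le₀ hq])
  have hqr : q ≤ r := (inv_le_inv₀ hr hq₀).1 (by linarith [inv_le_one_of_one_le₀ hp])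
  set F := epNorm q f with hF
  rw [epNorm_le_iff hr]
  calc ∑' b, (∑' a, K b a * f a) ^ r
      ≤ ∑' b, (∑' a, K b a ^ p * f a ^ q) * C ^ (r - p) * F ^ (r - q) := by
        gcongr with b
        refine (tsum_mul_rpow_le_s3 hp hq hr h (K b) f).trans ?_
        gcongr
        exact hrow b
    _ = (∑' a, (∑' b, K b a ^ p) * f a ^ q) * C ^ (r - p) * F ^ (r - q) := by
        simp only [ENNReal.tsum_mul_right]
        rw [ENNReal.tsum_comm]
        simp only [ENNReal.tsum_mul_right]
    _ ≤ (∑' a, C ^ p * f a ^ q) * C ^ (r - p) * F ^ (r - q) := by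
        gcongr with a
        exact (epNorm_le_iff hp₀).1 (hcol a)
    _ = (C ^ p * C ^ (r - p)) * (F ^ q * F ^ (r - q)) := by
        rw [ENNReal.tsum_mul_left, ← epNorm_rpow_self hq₀.ne', ← hF]
        ring
    _ = (C * F) ^ r := by
        rw [rpow_mul_rpow_sub _ hp₀.le hpr, rpow_mul_rpow_sub _ hq₀.le hqr,
          ENNReal.mul_rpow_of_nonneg _ _ hr.le]

lemma epNorm_conv_le {G : Type*} [AddGroup G] {s t : Set G} (hp : 1 ≤ p) (hq : 1 ≤ q) (hr : 0 < r)
    (h : p⁻¹ + q⁻¹ = 1 + r⁻¹) (K : G → ℝ≥0∞) (f : s → ℝ≥0∞) :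
    epNorm r (fun i : t => ∑' j : s, K (i - j) * f j) ≤ epNorm p K * epNorm q f := by
  have hp₀ : 0 ≤ p := by linarith
  have hrow (i : t) : Function.Injective fun j : s => i.1 - j.1 :=
    sub_right_injective.comp Subtype.val_injective
  have hcol (j : s) : Function.Injective fun i : t => i.1 - j.1 :=
    sub_left_injective.comp Subtype.val_injective
  exact epNorm_tsum_mul_le hp hq hr h (fun i => epNorm_comp_le_of_injective hp₀ (hrow i) K)
    (fun j => epNorm_comp_le_of_injective hp₀ (hcol j) K) f

/-! ### The power map -/

lemma enorm_pow_sub_pow_le [NormedField 𝕜] (x y : 𝕜) (d : ℕ) :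
    ‖x ^ d - y ^ d‖ₑ ≤ ∑ m ∈ Finset.range d, ‖x - y‖ₑ * ‖x‖ₑ ^ m * ‖y‖ₑ ^ (d - 1 - m) := by
  rw [← geom_sum₂_mul, Finset.sum_mul]
  refine (enorm_sum_le _ _).trans_eq (Finset.sum_congr rfl fun m _ => ?_)
  rw [enorm_mul, enorm_mul, enorm_pow, enorm_pow]
  ring

lemma epNorm_pow_sub_pow_le [NormedField 𝕜] {d : ℕ} (hd : d ≠ 0) (hp : d ≤ p) {x y : α → 𝕜}
    {c : ℝ≥0∞} (hx : epNorm p (‖x ·‖ₑ) ≤ c) (hy : epNorm p (‖y ·‖ₑ) ≤ c) :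
    epNorm (p / d) (fun a => ‖x a ^ d - y a ^ d‖ₑ) ≤
      d * c ^ (d - 1) * epNorm p (fun a => ‖x a - y a‖ₑ) := by
  have hd₀ : (0 : ℝ) < d := by positivity
  have hp₀ : 0 < p := hd₀.trans_le hp
  set term : ℕ → α → ℝ≥0∞ := fun m a => ‖x a - y a‖ₑ * ‖x a‖ₑ ^ m * ‖y a‖ₑ ^ (d - 1 - m)
  calc epNorm (p / d) (fun a => ‖x a ^ d - y a ^ d‖ₑ)
      ≤ epNorm (p / d) (∑ m ∈ Finset.range d, term m) := by
        refine epNorm_mono (by positivity) fun a => ?_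
        rw [Finset.sum_apply]
        exact enorm_pow_sub_pow_le (x a) (y a) d
    _ ≤ ∑ m ∈ Finset.range d, epNorm (p / d) (term m) :=
        Finset.le_sum_nonempty_of_subadditive _ (epNorm_add_le ((one_le_div₀ hd₀).2 hp))
          (Finset.nonempty_range_iff.2 hd) _
    _ ≤ ∑ m ∈ Finset.range d,
          epNorm p (fun a => ‖x a - y a‖ₑ) * c ^ m * c ^ (d - 1 - m) := by
        refine Finset.sum_le_sum fun m hm => ?_
        rw [Finset.mem_range] at hm
        refine (epNorm_mul_pow_mul_pow_le hp₀ (by omega) _ _ _).trans ?_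
        gcongr
    _ = d * c ^ (d - 1) * epNorm p (fun a => ‖x a - y a‖ₑ) := by
        simp only [mul_assoc, ← Finset.mul_sum, geom_sum₂_self]
        ring

end ExtendedNorm

/-! ### Real and extended norms -/

section RealNorm

variable {α : Type*} {p : ℝ}

lemma toReal_epNorm (hp : 0 ≤ p) (x : α → ℝ) : (epNorm p (‖x ·‖ₑ)).toReal = pNorm p x := by
  rw [epNorm, ← ENNReal.toReal_rpow, ENNReal.tsum_toReal_eq fun a =>
    ENNReal.rpow_ne_top_of_nonneg hp enorm_ne_top]
  simp [pNorm, ← ENNReal.toReal_rpow]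

lemma epNorm_ne_top (hp : 0 ≤ p) {x : α → ℝ} (h : Summable fun a => |x a| ^ p) :
    epNorm p (‖x ·‖ₑ) ≠ ∞ := by
  refine ENNReal.rpow_ne_top_of_nonneg (inv_nonneg.2 hp) ?_
  simpa only [Real.enorm_eq_ofReal_abs, ENNReal.ofReal_rpow_of_nonneg (abs_nonneg _) hp]
    using h.tsum_ofReal_ne_top

lemma pNorm_nonneg (p : ℝ) (x : α → ℝ) : 0 ≤ pNorm p x := by
  unfold pNorm
  positivity

lemma epNorm_le_ofReal (hp : 0 ≤ p) {x : α → ℝ} {ε : ℝ} (hx : Summable fun a => |x a| ^ p)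
    (h : pNorm p x ≤ ε) : epNorm p (‖x ·‖ₑ) ≤ ENNReal.ofReal ε :=
  (ENNReal.le_ofReal_iff_toReal_le (epNorm_ne_top hp hx)
    ((pNorm_nonneg p x).trans h)).2 ((toReal_epNorm hp x).trans_le h)

lemma summable_of_tsum_enorm_ne_top {f : α → ℝ} (h : ∑' a, ‖f a‖ₑ ≠ ∞) : Summable f :=
  Summable.of_norm (by simpa only [toReal_enorm] using ENNReal.summable_toReal h)

lemma epNorm_sub_ne_top (hp : 1 ≤ p) {x y : α → ℝ} (hx : epNorm p (‖x ·‖ₑ) ≠ ∞)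
    (hy : epNorm p (‖y ·‖ₑ) ≠ ∞) : epNorm p (fun a => ‖x a - y a‖ₑ) ≠ ∞ :=
  ne_top_of_le_ne_top (ENNReal.add_ne_top.2 ⟨hx, hy⟩)
    ((epNorm_mono (zero_le_one.trans hp) fun _ => enorm_sub_le).trans (epNorm_add_le hp _ _))

lemma enorm_div_le_of_one_le {M : ℝ} (hM : 1 ≤ M) (N : ℝ) : ‖N / M‖ₑ ≤ ‖N‖ₑ := by
  rw [enorm_le_iff_norm_le, norm_div]
  exact div_le_self (norm_nonneg N) (hM.trans (le_abs_self M))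

lemma enorm_div_sub_div_le {M M' : ℝ} (hM : 1 ≤ M) (hM' : M' ≠ 0) (N N' : ℝ) :
    ‖N / M - N' / M'‖ₑ ≤ ‖N - N'‖ₑ + ‖N' / M'‖ₑ * ‖M - M'‖ₑ := by
  have hM₀ : M ≠ 0 := by positivity
  calc ‖N / M - N' / M'‖ₑ = ‖(N - N' - N' / M' * (M - M')) / M‖ₑ := by
        congr 1
        field_simp
        ring
    _ ≤ ‖N - N' - N' / M' * (M - M')‖ₑ := enorm_div_le_of_one_le hM _
    _ ≤ ‖N - N'‖ₑ + ‖N' / M'‖ₑ * ‖M - M'‖ₑ := enorm_sub_le.trans_eq (by rw [enorm_mul])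

end RealNorm

/-! ### The quotient operator -/

/-- The operator `T` with `ℤ^k` replaced by a group `G` and `ℤ^k ∖ {0}` by a subset `s` of `G`. -/
def convQuot {G : Type*} [AddGroup G] (d : ℕ) (Q : G → ℝ) (s : Set G) (x : s → ℝ) (i : G) : ℝ :=
  (Q i + ∑' j : s, Q (i - j) * x j ^ d) / (1 + ∑' j : s, Q j * x j ^ d)

section Operator

variable {α G : Type*} [AddGroup G] {d : ℕ} {Q : G → ℝ} {s : Set G} {x y : s → ℝ}

lemma holderConjugate_succ (hd : 1 ≤ d) : ((d : ℝ) + 1).HolderConjugate ((d + 1) / d) := by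
  have hd₀ : (0 : ℝ) < d := by positivity
  rw [Real.holderConjugate_iff]
  refine ⟨by linarith, ?_⟩
  field_simp
  ring

lemma tsum_mul_pow_enorm_le (hd : 1 ≤ d) (f g : α → ℝ≥0∞) :
    ∑' a, f a * g a ^ d ≤ epNorm ((d : ℝ) + 1) f * epNorm ((d : ℝ) + 1) g ^ d :=
  (tsum_mul_le_epNorm_mul_epNorm (holderConjugate_succ hd) f _).trans <| by
    gcongr
    exact epNorm_pow_le (by positivity) (by omega) g

lemma summable_mul_pow (hd : 1 ≤ d) {w z : α → ℝ} (hw : epNorm ((d : ℝ) + 1) (‖w ·‖ₑ) ≠ ∞)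
    (hz : epNorm ((d : ℝ) + 1) (‖z ·‖ₑ) ≠ ∞) : Summable fun a => w a * z a ^ d := by
  refine summable_of_tsum_enorm_ne_top (ne_top_of_le_ne_top
    (ENNReal.mul_ne_top hw (ENNReal.pow_ne_top hz (n := d))) ?_)
  simpa only [enorm_mul, enorm_pow] using tsum_mul_pow_enorm_le hd (‖w ·‖ₑ) (‖z ·‖ₑ)

lemma epNorm_succ_le (d : ℕ) (f : α → ℝ≥0∞) :
    epNorm ((d : ℝ) + 1) f ≤ epNorm (((d : ℝ) + 1) / 2) f :=
  epNorm_le_epNorm_of_exponent_le (by positivity) (half_le_self (by positivity)) f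

lemma epNorm_conv_succ_le (hd : 1 ≤ d) (K : G → ℝ≥0∞) (f : s → ℝ≥0∞) :
    epNorm ((d : ℝ) + 1) (fun i : s => ∑' j : s, K (i - j) * f j) ≤
      epNorm (((d : ℝ) + 1) / 2) K * epNorm (((d : ℝ) + 1) / d) f := by
  have hd₁ : (1 : ℝ) ≤ d := by exact_mod_cast hd
  have hd₀ : (0 : ℝ) < d := by linarith
  refine epNorm_conv_le ?_ ?_ (by positivity) ?_ K f
  · linarith
  · rw [one_le_div₀ hd₀]
    linarith
  · field_simp
    ring

lemma one_le_one_add_tsum_mul_pow {w z : α → ℝ} (hw : ∀ a, 0 ≤ w a) (hz : ∀ a, 0 ≤ z a) (d : ℕ) :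
    1 ≤ 1 + ∑' a, w a * z a ^ d :=
  le_add_of_nonneg_right (tsum_nonneg fun a => mul_nonneg (hw a) (pow_nonneg (hz a) d))

lemma epNorm_convQuot_le (hd : 1 ≤ d) (hQ : ∀ g, 0 ≤ Q g) (hx : ∀ j, 0 ≤ x j) :
    epNorm ((d : ℝ) + 1) (fun i : s => ‖convQuot d Q s x i‖ₑ) ≤
      epNorm ((d : ℝ) + 1) (fun i : s => ‖Q i‖ₑ) +
        epNorm (((d : ℝ) + 1) / 2) (‖Q ·‖ₑ) * epNorm ((d : ℝ) + 1) (‖x ·‖ₑ) ^ d := by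
  have pointwise (i : s) : ‖convQuot d Q s x i‖ₑ ≤
      ‖Q i‖ₑ + ∑' j : s, ‖Q (i - j)‖ₑ * ‖x j‖ₑ ^ d := by
    refine (enorm_div_le_of_one_le (one_le_one_add_tsum_mul_pow (fun j : s => hQ j) hx d) _).trans
      ((enorm_add_le _ _).trans (add_le_add_right ?_ _))
    simpa only [enorm_mul, enorm_pow] using
      enorm_tsum_le_tsum_enorm (f := fun j : s => Q (i - j) * x j ^ d)
  refine (epNorm_mono (by positivity) pointwise).trans
    ((epNorm_add_le (by simp) _ _).trans (add_le_add_right ?_ _))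
  refine (epNorm_conv_succ_le hd (‖Q ·‖ₑ) (‖x ·‖ₑ ^ d)).trans ?_
  gcongr
  exact epNorm_pow_le (by positivity) (by omega) _

lemma enorm_convQuot_sub_le (hd : 1 ≤ d) (hQ : ∀ g, 0 ≤ Q g) (hx : ∀ j, 0 ≤ x j)
    (hy : ∀ j, 0 ≤ y j) (hQt : epNorm ((d : ℝ) + 1) (‖Q ·‖ₑ) ≠ ∞)
    (hxt : epNorm ((d : ℝ) + 1) (‖x ·‖ₑ) ≠ ∞) (hyt : epNorm ((d : ℝ) + 1) (‖y ·‖ₑ) ≠ ∞) (i : G) :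
    ‖convQuot d Q s x i - convQuot d Q s y i‖ₑ ≤
      ∑' j : s, ‖Q (i - j)‖ₑ * ‖x j ^ d - y j ^ d‖ₑ +
        ‖convQuot d Q s y i‖ₑ * ∑' j : s, ‖Q j‖ₑ * ‖x j ^ d - y j ^ d‖ₑ := by
  have enorm_tsum_sub_le {φ : s → G} (hφ : φ.Injective) :
      ‖∑' j, Q (φ j) * x j ^ d - ∑' j, Q (φ j) * y j ^ d‖ₑ ≤
        ∑' j, ‖Q (φ j)‖ₑ * ‖x j ^ d - y j ^ d‖ₑ := by
    have hφt : epNorm ((d : ℝ) + 1) (fun j => ‖Q (φ j)‖ₑ) ≠ ∞ :=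
      ne_top_of_le_ne_top hQt (epNorm_comp_le_of_injective (by positivity) hφ (‖Q ·‖ₑ))
    rw [← (summable_mul_pow hd hφt hxt).tsum_sub (summable_mul_pow hd hφt hyt)]
    simpa only [← mul_sub, enorm_mul] using
      enorm_tsum_le_tsum_enorm (f := fun j => Q (φ j) * x j ^ d - Q (φ j) * y j ^ d)
  have hMx := one_le_one_add_tsum_mul_pow (fun j : s => hQ j) hx d
  have hMy := one_le_one_add_tsum_mul_pow (fun j : s => hQ j) hy d
  refine (enorm_div_sub_div_le hMx (by positivity) _ _).trans ?_
  rw [add_sub_add_left_eq_sub, add_sub_add_left_eq_sub, ← convQuot]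
  gcongr
  · exact enorm_tsum_sub_le (sub_right_injective.comp Subtype.val_injective)
  · exact enorm_tsum_sub_le Subtype.val_injective

lemma epNorm_convQuot_sub_le (hd : 1 ≤ d) (hQ : ∀ g, 0 ≤ Q g) (hx : ∀ j, 0 ≤ x j)
    (hy : ∀ j, 0 ≤ y j) (hQt : epNorm (((d : ℝ) + 1) / 2) (‖Q ·‖ₑ) ≠ ∞) {c : ℝ≥0∞} (hc : c ≠ ∞)
    (hball : epNorm ((d : ℝ) + 1) (fun i : s => ‖Q i‖ₑ) +
      epNorm (((d : ℝ) + 1) / 2) (‖Q ·‖ₑ) * c ^ d ≤ c)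
    (hxc : epNorm ((d : ℝ) + 1) (‖x ·‖ₑ) ≤ c) (hyc : epNorm ((d : ℝ) + 1) (‖y ·‖ₑ) ≤ c) :
    epNorm ((d : ℝ) + 1) (fun i : s => ‖convQuot d Q s x i - convQuot d Q s y i‖ₑ) ≤
      d * (epNorm (((d : ℝ) + 1) / 2) (‖Q ·‖ₑ) * c ^ (d - 1) +
        epNorm ((d : ℝ) + 1) (fun i : s => ‖Q i‖ₑ) * c ^ d) *
          epNorm ((d : ℝ) + 1) (fun j => ‖x j - y j‖ₑ) := by
  set γ := epNorm (((d : ℝ) + 1) / 2) (‖Q ·‖ₑ)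
  set δ := epNorm ((d : ℝ) + 1) (fun i : s => ‖Q i‖ₑ)
  set Δ := epNorm ((d : ℝ) + 1) (fun j => ‖x j - y j‖ₑ)
  set A := epNorm (((d : ℝ) + 1) / d) (fun j => ‖x j ^ d - y j ^ d‖ₑ)
  have hp : 0 < (d : ℝ) + 1 := by positivity
  have hQt' : epNorm ((d : ℝ) + 1) (‖Q ·‖ₑ) ≠ ∞ := ne_top_of_le_ne_top hQt
    (epNorm_succ_le d _)
  have hA : A ≤ d * c ^ (d - 1) * Δ := epNorm_pow_sub_pow_le (by omega) (by simp) hxc hyc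
  have hTy : epNorm ((d : ℝ) + 1) (fun i : s => ‖convQuot d Q s y i‖ₑ) ≤ c :=
    (epNorm_convQuot_le hd hQ hy).trans (le_trans (by gcongr) hball)
  have hsum : ∑' j : s, ‖Q j‖ₑ * ‖x j ^ d - y j ^ d‖ₑ ≤ δ * A :=
    tsum_mul_le_epNorm_mul_epNorm (holderConjugate_succ hd) _ _
  calc epNorm ((d : ℝ) + 1) (fun i : s => ‖convQuot d Q s x i - convQuot d Q s y i‖ₑ)
      ≤ γ * A + c * (δ * A) := by
        refine (epNorm_mono hp.le fun i : s => enorm_convQuot_sub_le hd hQ hx hy hQt'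
          (ne_top_of_le_ne_top hc hxc) (ne_top_of_le_ne_top hc hyc) i).trans
          ((epNorm_add_le (by simp) _ _).trans ?_)
        rw [epNorm_mul_const hp]
        gcongr
        exact epNorm_conv_succ_le hd (‖Q ·‖ₑ) _
    _ ≤ γ * (d * c ^ (d - 1) * Δ) + c * (δ * (d * c ^ (d - 1) * Δ)) := by gcongr
    _ = d * (γ * c ^ (d - 1) + δ * c ^ d) * Δ := by
        rw [← mul_pow_sub_one (by omega : d ≠ 0) c]
        ring

end Operator

theorem stmt3_general {G : Type*} [AddGroup G] {d : ℕ} (hd : 1 ≤ d) {Q : G → ℝ}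
    (hQ : ∀ g, 0 ≤ Q g) (hsum : Summable fun g => |Q g| ^ (((d : ℝ) + 1) / 2)) {s : Set G} {ε : ℝ}
    (hball : pNorm ((d : ℝ) + 1) (fun i : s => Q i) + pNorm (((d : ℝ) + 1) / 2) Q * ε ^ d ≤ ε)
    {x y : s → ℝ} (hx : Summable fun j => |x j| ^ ((d : ℝ) + 1)) (hx₀ : ∀ j, 0 ≤ x j)
    (hy : Summable fun j => |y j| ^ ((d : ℝ) + 1)) (hy₀ : ∀ j, 0 ≤ y j)
    (hxb : pNorm ((d : ℝ) + 1) x ≤ ε) (hyb : pNorm ((d : ℝ) + 1) y ≤ ε) :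
    pNorm ((d : ℝ) + 1) (fun i : s => convQuot d Q s x i - convQuot d Q s y i) ≤
      d * (pNorm (((d : ℝ) + 1) / 2) Q * ε ^ (d - 1) +
        pNorm ((d : ℝ) + 1) (fun i : s => Q i) * ε ^ d) *
          pNorm ((d : ℝ) + 1) (fun j => x j - y j) := by
  have hp : 0 ≤ (d : ℝ) + 1 := by positivity
  have hε : 0 ≤ ε := (pNorm_nonneg _ x).trans hxb
  have hxc := epNorm_le_ofReal hp hx hxb
  have hyc := epNorm_le_ofReal hp hy hyb
  have hΔ := epNorm_sub_ne_top (by simp) (epNorm_ne_top hp hx) (epNorm_ne_top hp hy)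
  have hγ := epNorm_ne_top (by positivity) hsum
  have hδ : epNorm ((d : ℝ) + 1) (fun i : s => ‖Q i‖ₑ) ≠ ∞ := ne_top_of_le_ne_top hγ
    ((epNorm_comp_le_of_injective hp Subtype.val_injective (‖Q ·‖ₑ)).trans (epNorm_succ_le d _))
  have hball' : epNorm ((d : ℝ) + 1) (fun i : s => ‖Q i‖ₑ) +
      epNorm (((d : ℝ) + 1) / 2) (‖Q ·‖ₑ) * ENNReal.ofReal ε ^ d ≤ ENNReal.ofReal ε := by
    rw [ENNReal.le_ofReal_iff_toReal_le (by finiteness) hε,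
      ENNReal.toReal_add hδ (by finiteness), ENNReal.toReal_mul, ENNReal.toReal_pow,
      toReal_epNorm hp, toReal_epNorm (by positivity), ENNReal.toReal_ofReal hε]
    exact hball
  have key := ENNReal.toReal_mono (by finiteness)
    (epNorm_convQuot_sub_le hd hQ hx₀ hy₀ hγ ENNReal.ofReal_ne_top hball' hxc hyc)
  rw [ENNReal.toReal_mul, ENNReal.toReal_mul, ENNReal.toReal_natCast,
    ENNReal.toReal_add (by finiteness) (by finiteness), ENNReal.toReal_mul, ENNReal.toReal_mul,
    ENNReal.toReal_pow, ENNReal.toReal_pow, ENNReal.toReal_ofReal hε, toReal_epNorm hp,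
    toReal_epNorm hp, toReal_epNorm hp, toReal_epNorm (by positivity)] at key
  exact key


/-- Proposition 2.8, part 2: Lipschitz continuity of `T` on the invariant ball.
With `γ := ‖Q‖_{(d+1)/2,ℤ^k}` and `δ := ‖Q‖_{d+1,ℤ^k∖{0}}` finite, if `ε > 0` satisfies
`δ + γ ε^d ≤ ε`, then for all `x, y ∈ B_ε(0) ∩ D`,
`‖T(x) − T(y)‖_{d+1} ≤ 2d(γ ε^{d−1} + δ ε^d) ‖x − y‖_{d+1}`. -/
theorem stmt3 (k d : ℕ) (hk : 1 ≤ k) (hd : 2 ≤ d)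
    (Q : ZkL k → ℝ) (hQpos : ∀ j, 0 < Q j) (hQ0 : Q 0 = 1)
    (hsum1 : Summable fun j : ZkL k => |Q j| ^ (((d : ℝ) + 1) / 2))
    (hsum2 : Summable fun j : ZkP k => |Q j.1| ^ ((d : ℝ) + 1))
    (ε : ℝ) (hε : 0 < ε)
    (hball : del k d Q + gam k d Q * ε ^ d ≤ ε)
    (x y : ZkP k → ℝ) (hx : memD k d x) (hy : memD k d y)
    (hxb : norm0 k ((d : ℝ) + 1) x ≤ ε) (hyb : norm0 k ((d : ℝ) + 1) y ≤ ε) :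
    norm0 k ((d : ℝ) + 1) (fun i : ZkP k => opT k d Q x i.1 - opT k d Q y i.1) ≤
      2 * d * (gam k d Q * ε ^ (d - 1) + del k d Q * ε ^ d) *
        norm0 k ((d : ℝ) + 1) (fun i : ZkP k => x i - y i) := by
  have h := stmt3_general (by omega) (fun g => (hQpos g).le) hsum1 (s := {j | j ≠ 0}) hball
    hx.1 hx.2 hy.1 hy.2 hxb hyb
  rw [mul_assoc (2 : ℝ), mul_assoc (2 : ℝ)]
  exact h.trans (le_mul_of_one_le_left ((pNorm_nonneg _ _).trans h) one_le_two)
end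
end
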